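/- arXiv:2102.11106 — 10 statements merged into one kernel-verified Lean document; each statement's English description precedes it below -/
import Mathlib

section
/- For every integer N there exist k ∈ ℕ and digits d_0, d_1, …, d_k ∈ {0,1,2} such that N = (1/2)·∑_{i=0}^{k} d_i·(−3/2)^i. -/
/-- One step of the expansion, by strong induction on `2|N| + [N < 0]`. -/
theorem expansion_aux (n : ℕ) : ∀ N : ℤ, 2 * N.natAbs + (if N < 0 then 1 else 0) = n →
    ∃ (k : ℕ) (d : ℕ → ℕ), (∀ i ≤ k, d i ≤ 2) ∧
      (N : ℚ) = (1 / 2) * ∑ i ∈ Finset.range (k + 1), (d i : ℚ) * (-3 / 2) ^ i := by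
  induction n using Nat.strong_induction_on with
  | _ n ih =>
    intro N hN
    by_cases h0 : N = 0
    · exact ⟨0, fun _ => 0, by simp, by simp [h0]⟩
    obtain ⟨c, M, hc, hM⟩ : ∃ (c : ℕ) (M : ℤ), c ≤ 2 ∧ 2 * N = c - 3 * M :=
      ⟨((2 * N) % 3).toNat, -((2 * N) / 3), by omega, by omega⟩
    obtain ⟨k, d, hd, hs⟩ := ih (2 * M.natAbs + (if M < 0 then 1 else 0))
      (by split_ifs at hN ⊢ <;> omega) M rfl
    refine ⟨k + 1, fun i => Nat.casesOn i c d, ?_, ?_⟩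
    · rintro (_ | i) hi
      · exact hc
      · exact hd i (by omega)
    · have hM' : (2 : ℚ) * N = c - 3 * M := by exact_mod_cast hM
      rw [Finset.sum_range_succ']
      have e : ∑ i ∈ Finset.range (k + 1), (d i : ℚ) * (-3 / 2) ^ (i + 1)
          = (-3 / 2) * ∑ i ∈ Finset.range (k + 1), (d i : ℚ) * (-3 / 2) ^ i := by
        rw [Finset.mul_sum]
        exact Finset.sum_congr rfl fun i _ => by ring
      simp only [e, pow_zero]
      change (N : ℚ) = 1 / 2 * (-3 / 2 * ∑ i ∈ Finset.range (k + 1), (d i : ℚ) * (-3 / 2) ^ i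
        + (c : ℚ) * 1)
      linarith

/-- Every integer `N` has an integer `(-3/2)`-expansion:
there exist `k ∈ ℕ` and digits `d 0, …, d k ∈ {0,1,2}` such that
`N = (1/2) · ∑_{i=0}^{k} d i · (-3/2)^i`. -/
theorem integer_has_neg_three_halves_expansion (N : ℤ) :
    ∃ (k : ℕ) (d : ℕ → ℕ), (∀ i ≤ k, d i ≤ 2) ∧
      (N : ℚ) = (1 / 2) * ∑ i ∈ Finset.range (k + 1), (d i : ℚ) * (-3 / 2) ^ i :=
  expansion_aux _ N rfl
end

section
/- The integer (−3/2)-expansion of an integer is unique: if (1/2)·∑_{i=0}^{k} d_i·(−3/2)^i = (1/2)·∑_{i=0}^{k} e_i·(−3/2)^i with all d_i, e_i ∈ {0,1,2} (padding the shorter expansion with zeros), then d_i = e_i for all i. -/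
theorem aux_int (n : ℕ) : ∀ (c : ℕ → ℤ),
    ∃ m : ℤ, (2 : ℚ) ^ n * ∑ i ∈ Finset.range n, (c i : ℚ) * (-3 / 2) ^ i = m := by
  induction n with
  | zero => intro c; exact ⟨0, by simp⟩
  | succ n ih =>
    intro c
    obtain ⟨m, hm⟩ := ih c
    refine ⟨2 * m + 2 * c n * (-3) ^ n, ?_⟩
    have h : (2 : ℚ) ^ n * (-3 / 2) ^ n = (-3) ^ n := by
      rw [← mul_pow]; norm_num
    rw [Finset.sum_range_succ, pow_succ]
    push_cast
    rw [← hm, ← h]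
    ring

theorem aux_zero (n : ℕ) : ∀ (c : ℕ → ℤ), (∀ i < n, -2 ≤ c i ∧ c i ≤ 2) →
    ∑ i ∈ Finset.range n, (c i : ℚ) * (-3 / 2) ^ i = 0 → ∀ i < n, c i = 0 := by
  induction n with
  | zero => intro c _ _ i hi; omega
  | succ n ih =>
    intro c hc hs
    rw [Finset.sum_range_succ'] at hs
    have h1 : ∑ i ∈ Finset.range n, (c (i + 1) : ℚ) * (-3 / 2) ^ (i + 1)
        = (-3 / 2) * ∑ i ∈ Finset.range n, (c (i + 1) : ℚ) * (-3 / 2) ^ i := by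
      rw [Finset.mul_sum]
      exact Finset.sum_congr rfl fun i _ => by ring
    rw [h1] at hs
    obtain ⟨m, hm⟩ := aux_int n (fun i => c (i + 1))
    have h2 : (2 : ℤ) ^ (n + 1) * c 0 = 3 * m := by
      have : (2 : ℚ) ^ (n + 1) * c 0 = 3 * m := by
        rw [← hm, pow_succ]
        linear_combination (2 * 2 ^ n) * hs
      exact_mod_cast this
    have h3 : (3 : ℤ) ∣ c 0 := by
      have hcop : IsCoprime (3 : ℤ) (2 ^ (n + 1)) :=
        IsCoprime.pow_right ⟨1, -1, by norm_num⟩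
      exact hcop.dvd_of_dvd_mul_left ⟨m, h2⟩
    have h0 : c 0 = 0 := by
      have := hc 0 (by omega)
      omega
    have h4 := ih (fun i => c (i + 1)) (fun i hi => hc (i + 1) (by omega)) (by
      simp only [h0] at hs ⊢
      linarith)
    intro i hi
    cases i with
    | zero => exact h0
    | succ j => exact h4 j (by omega)

/-- The integer `(-3/2)`-expansion of an integer is unique:
if `(1/2)·∑_{i=0}^{k} d i·(-3/2)^i = (1/2)·∑_{i=0}^{k} e i·(-3/2)^i` is an integer
with all `d i, e i ∈ {0,1,2}` (padding with zeros), then `d i = e i` for all `i ≤ k`. -/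
theorem integer_neg_three_halves_expansion_unique (N : ℤ) (k : ℕ) (d e : ℕ → ℕ)
    (hd : ∀ i ≤ k, d i ≤ 2) (he : ∀ i ≤ k, e i ≤ 2)
    (hNd : (N : ℚ) = (1 / 2) * ∑ i ∈ Finset.range (k + 1), (d i : ℚ) * (-3 / 2) ^ i)
    (hNe : (N : ℚ) = (1 / 2) * ∑ i ∈ Finset.range (k + 1), (e i : ℚ) * (-3 / 2) ^ i) :
    ∀ i ≤ k, d i = e i := by
  intro i hi
  have h := aux_zero (k + 1) (fun i => (d i : ℤ) - e i) (fun i hi => by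
      have := hd i (by omega)
      have := he i (by omega)
      constructor <;> omega) (by
      push_cast
      simp only [sub_mul, Finset.sum_sub_distrib]
      linarith) i (by omega)
  omega
end

section
/- For every integer N and every d ∈ {0,1,2}, there is exactly one integer N' with 2N = −3N' + d if and only if d ≡ 2N (mod 3); consequently the digit algorithm 2N_i = −3N_{i+1} + d_i (d_i ∈ {0,1,2}) is well defined and, starting from any N_0 ∈ ℤ, produces a sequence (N_i) that is eventually zero. -/
/-- For every `N ∈ ℤ` and every `d ∈ {0,1,2}`, there is exactly one `N' ∈ ℤ`
with `2N = -3N' + d` if and only if `d ≡ 2N (mod 3)`; consequently the digit algorithm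
`2·N i = -3·N (i+1) + d i` (with `d i ∈ {0,1,2}`) is well defined and, starting from any
`N 0 ∈ ℤ`, produces a sequence `N` that is eventually zero. -/
theorem digit_algorithm_well_defined_and_terminates :
    (∀ N : ℤ, ∀ d ∈ ({0, 1, 2} : Set ℤ),
      (∃! N' : ℤ, 2 * N = -3 * N' + d) ↔ d ≡ 2 * N [ZMOD 3]) ∧
    (∀ (N : ℕ → ℤ) (d : ℕ → ℤ), (∀ i, d i ∈ ({0, 1, 2} : Set ℤ)) →
      (∀ i, 2 * N i = -3 * N (i + 1) + d i) →
      ∃ k : ℕ, ∀ i ≥ k, N i = 0) := by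
  refine ⟨?_, ?_⟩
  · intro N d _
    constructor
    · rintro ⟨N', h, _⟩
      simp only [Int.ModEq]
      omega
    · intro h
      simp only [Int.ModEq] at h
      refine ⟨(d - 2 * N) / 3, ?_, ?_⟩
      · show 2 * N = -3 * ((d - 2 * N) / 3) + d
        omega
      · intro y hy
        have hy2 : 2 * N = -3 * y + d := hy
        omega
  · intro N d hd hN
    have hd2 : ∀ i, 0 ≤ d i ∧ d i ≤ 2 := by
      intro i
      have h := hd i
      simp only [Set.mem_insert_iff, Set.mem_singleton_iff] at h
      omega
    -- the measure 2|N| + [N < 0] strictly decreases until zero is reached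
    have key : ∀ m : ℕ, ∀ i, 2 * N i ≤ m → -2 * N i + 1 ≤ m ∨ 0 ≤ N i →
        ∃ k, N k = 0 := by
      intro m
      induction m with
      | zero =>
        intro i h1 h2
        exact ⟨i, by omega⟩
      | succ m ih =>
        intro i h1 h2
        by_cases h0 : N i = 0
        · exact ⟨i, h0⟩
        · have a := hN i
          have b := hd2 i
          push_cast at h1 h2
          exact ih (i + 1) (by omega) (by omega)
    obtain ⟨k, hk⟩ := key (2 * (N 0).natAbs + 1) 0 (by omega) (by omega)
    refine ⟨k, fun i hi => ?_⟩
    induction i, hi using Nat.le_induction with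
    | base => exact hk
    | succ n _ ih =>
      have a := hN n
      have b := hd2 n
      omega
end

section
/- A rational number x admits an integer (−3/2)-expansion if and only if x ∈ ℤ[1/2], i.e., the set {(1/2)·∑_{i=0}^{k} d_i·(−3/2)^i : k ∈ ℕ, d_i ∈ {0,1,2}} equals ℤ[1/2]. -/
/-- `x` admits an integer `(-3/2)`-expansion. -/
def HasExp (x : ℚ) : Prop := ∃ (k : ℕ) (d : ℕ → ℕ), (∀ i ≤ k, d i ≤ 2) ∧
        x = (1 / 2) * ∑ i ∈ Finset.range (k + 1), (d i : ℚ) * (-3 / 2) ^ i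

theorem HasExp.step {x y : ℚ} (c : ℕ) (hc : c ≤ 2) (h : HasExp y)
    (hx : 2 * x = c - 3 * y) : HasExp x := by
  obtain ⟨k, d, hd, rfl⟩ := h
  refine ⟨k + 1, fun i => Nat.casesOn i c d, ?_, ?_⟩
  · rintro (_ | i) hi
    · exact hc
    · exact hd i (by omega)
  · rw [Finset.sum_range_succ']
    have : ∀ i : ℕ, ((d i : ℚ)) * (-3 / 2) ^ (i + 1) = (-3 / 2) * ((d i : ℚ) * (-3 / 2) ^ i) := by
      intro i; ring
    simp only [this, ← Finset.mul_sum]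
    simp only [pow_zero]
    change x = 1 / 2 * (-3 / 2 * ∑ i ∈ Finset.range (k + 1), (d i : ℚ) * (-3 / 2) ^ i + (c : ℚ) * 1)
    linarith

theorem hasExp_zero : HasExp 0 := ⟨0, fun _ => 0, by simp, by simp⟩

theorem hasExp_int (n : ℕ) : ∀ a : ℤ, a.natAbs ≤ n → HasExp (a : ℚ) := by
  have h1 : HasExp 1 := hasExp_zero.step 2 (by norm_num) (by norm_num)
  have hm1 : HasExp (-1) := h1.step 1 (by norm_num) (by norm_num)
  have h2 : HasExp 2 := hm1.step 1 (by norm_num) (by norm_num)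
  have hm2 : HasExp (-2) := h2.step 2 (by norm_num) (by norm_num)
  induction n with
  | zero =>
    intro a ha
    obtain rfl : a = 0 := by omega
    simpa using hasExp_zero
  | succ n ih =>
    intro a ha
    by_cases hs : a.natAbs ≤ 2
    · have : a = 0 ∨ a = 1 ∨ a = -1 ∨ a = 2 ∨ a = -2 := by omega
      rcases this with rfl | rfl | rfl | rfl | rfl
      · simpa using hasExp_zero
      · simpa using h1
      · simpa using hm1
      · simpa using h2
      · simpa using hm2
    · obtain ⟨c, b, hc, hb⟩ : ∃ (c : ℕ) (b : ℤ), c ≤ 2 ∧ 2 * a = c - 3 * b :=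
        ⟨((2 * a) % 3).toNat, -((2 * a) / 3), by omega, by omega⟩
      exact (ih b (by omega)).step c hc (by exact_mod_cast hb)

theorem hasExp_dyadic (l : ℕ) : ∀ a : ℤ, HasExp ((a : ℚ) / 2 ^ l) := by
  induction l with
  | zero => intro a; simpa using hasExp_int _ a le_rfl
  | succ l ih =>
    intro a
    obtain ⟨c, b, hc, hb⟩ : ∃ (c : ℕ) (b : ℤ), c ≤ 2 ∧ a = c * 2 ^ l - 3 * b := by
      have h3 : ((2 : ℤ) ^ l) % 3 = 1 ∨ ((2 : ℤ) ^ l) % 3 = 2 := by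
        clear ih
        induction l with
        | zero => simp
        | succ l ih => rw [pow_succ]; omega
      generalize (2 : ℤ) ^ l = p at *
      have : (3 : ℤ) ∣ a ∨ (3 : ℤ) ∣ p - a ∨ (3 : ℤ) ∣ 2 * p - a := by omega
      rcases this with ⟨b, h⟩ | ⟨b, h⟩ | ⟨b, h⟩
      · exact ⟨0, -b, by omega, by push_cast; omega⟩
      · exact ⟨1, b, by omega, by push_cast; omega⟩
      · exact ⟨2, b, by omega, by push_cast; omega⟩
    refine (ih b).step c hc ?_
    have hb' : (a : ℚ) = c * 2 ^ l - 3 * b := by exact_mod_cast hb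
    rw [hb', pow_succ]
    field_simp

theorem dyadic_sum (d : ℕ → ℕ) (k : ℕ) :
    ∃ a : ℤ, ∑ i ∈ Finset.range k, (d i : ℚ) * (-3 / 2) ^ i = (a : ℚ) / 2 ^ k := by
  induction k with
  | zero => exact ⟨0, by simp⟩
  | succ k ih =>
    obtain ⟨a, ha⟩ := ih
    refine ⟨2 * a + 2 * d k * (-3) ^ k, ?_⟩
    rw [Finset.sum_range_succ, ha, div_pow, pow_succ]
    push_cast
    field_simp

/-- A rational number admits an integer `(-3/2)`-expansion iff it lies in
`ℤ[1/2]`: the set of all numbers of the form `(1/2)·∑_{i=0}^{k} d i·(-3/2)^i` with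
`k ∈ ℕ` and digits `d i ∈ {0,1,2}` equals the set of dyadic rationals `{a/2^ℓ}`. -/
theorem expansion_set_eq_dyadic :
    {x : ℚ | ∃ (k : ℕ) (d : ℕ → ℕ), (∀ i ≤ k, d i ≤ 2) ∧
        x = (1 / 2) * ∑ i ∈ Finset.range (k + 1), (d i : ℚ) * (-3 / 2) ^ i} =
      {x : ℚ | ∃ (a : ℤ) (ℓ : ℕ), x = (a : ℚ) / 2 ^ ℓ} := by
  ext x
  constructor
  · rintro ⟨k, d, -, rfl⟩
    obtain ⟨a, ha⟩ := dyadic_sum d (k + 1)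
    refine ⟨a, k + 2, ?_⟩
    rw [ha, pow_succ 2 (k + 1)]
    field_simp
  · rintro ⟨a, l, rfl⟩
    exact hasExp_dyadic l a
end

section
/- The set Ω of fractional parts of the number system (−3/2, {0,1,2}) satisfies the set equation (−3/2)·Ω = Ω ∪ (Ω + 1/2) ∪ (Ω + 1). -/
/-- The set `Ω` of fractional parts of the number system `(-3/2, {0,1,2})`:
all real numbers of the form `(1/2)·∑_{i=1}^{∞} d_{-i}·(-3/2)^{-i}` with digits
`d_{-i} ∈ {0,1,2}`. -/
def Omega : Set ℝ :=
  {x : ℝ | ∃ d : ℕ → ℕ, (∀ i, d i ≤ 2) ∧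
    HasSum (fun i : ℕ => (1 / 2 : ℝ) * (d i : ℝ) * (-3 / 2 : ℝ) ^ (-(i : ℤ) - 1)) x}

theorem Omega_shift (d : ℕ → ℕ) (x : ℝ) :
    HasSum (fun i : ℕ => (1 / 2 : ℝ) * (d i : ℝ) * (-3 / 2 : ℝ) ^ (-(i : ℤ) - 1)) x ↔
    HasSum (fun i : ℕ => (1 / 2 : ℝ) * (d (i + 1) : ℝ) * (-3 / 2 : ℝ) ^ (-(i : ℤ) - 1))
      ((-3 / 2) * x - (d 0 : ℝ) / 2) := by
  have h0 : (-3 / 2 : ℝ) ≠ 0 := by norm_num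
  rw [← hasSum_mul_left_iff h0, ← hasSum_nat_add_iff' 1]
  have e1 : ∀ i : ℕ, (-3 / 2 : ℝ) * ((1 / 2 : ℝ) * (d (i + 1) : ℝ) *
      (-3 / 2 : ℝ) ^ (-((i + 1 : ℕ) : ℤ) - 1)) =
      (1 / 2 : ℝ) * (d (i + 1) : ℝ) * (-3 / 2 : ℝ) ^ (-(i : ℤ) - 1) := by
    intro i
    have : (-(i : ℤ) - 1) = (-((i + 1 : ℕ) : ℤ) - 1) + 1 := by push_cast; ring
    rw [this, zpow_add_one₀ h0]
    ring
  have e2 : (-3 / 2 : ℝ) * ((1 / 2 : ℝ) * (d 0 : ℝ) * (-3 / 2 : ℝ) ^ (-((0 : ℕ) : ℤ) - 1)) =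
      (d 0 : ℝ) / 2 := by
    norm_num
    ring
  simp only [e1, Finset.sum_range_one, e2]

theorem Omega_mem_iff (x : ℝ) :
    x ∈ Omega ↔ ∃ a : ℕ, a ≤ 2 ∧ (-3 / 2) * x - (a : ℝ) / 2 ∈ Omega := by
  constructor
  · rintro ⟨d, hd, h⟩
    exact ⟨d 0, hd 0, fun i => d (i + 1), fun i => hd _, (Omega_shift d x).1 h⟩
  · rintro ⟨a, ha, d, hd, h⟩
    refine ⟨fun n => if n = 0 then a else d (n - 1), ?_, ?_⟩
    · rintro (_ | i)
      · simpa using ha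
      · simpa using hd i
    · rw [Omega_shift]
      simp only [Nat.add_eq_zero_iff, one_ne_zero, and_false, if_false, if_true,
        Nat.add_sub_cancel]
      exact h

/-- `Ω` satisfies the set equation `(-3/2)·Ω = Ω ∪ (Ω + 1/2) ∪ (Ω + 1)`. -/
theorem Omega_set_equation :
    (fun x : ℝ => (-3 / 2) * x) '' Omega =
      Omega ∪ (fun x : ℝ => x + 1 / 2) '' Omega ∪ (fun x : ℝ => x + 1) '' Omega := by
  ext y
  constructor
  · rintro ⟨x, hx, rfl⟩
    obtain ⟨a, ha, h⟩ := (Omega_mem_iff x).1 hx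
    interval_cases a
    · left; left; simpa using h
    · left; right; exact ⟨_, h, by norm_num⟩
    · right; exact ⟨_, h, by norm_num⟩
  · have key : ∀ a : ℕ, a ≤ 2 → ∀ z ∈ Omega, z + (a : ℝ) / 2 = y →
        y ∈ (fun x : ℝ => (-3 / 2) * x) '' Omega := by
      intro a ha z hz e
      refine ⟨(-2 / 3) * y, (Omega_mem_iff _).2 ⟨a, ha, ?_⟩, by ring⟩
      convert hz using 1
      rw [← e]; ring
    rintro ((h | ⟨z, hz, e⟩) | ⟨z, hz, e⟩)
    · exact key 0 (by norm_num) y h (by simp)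
    · exact key 1 (by norm_num) z hz (by simpa using e)
    · exact key 2 (by norm_num) z hz (by simpa using e)
end

section
/- The set Ω of fractional parts of the number system (−3/2, {0,1,2}) equals the closed interval [−6/5, 4/5]. -/
theorem aux_term (i : ℕ) : (-3 / 2 : ℝ) ^ (-(i : ℤ) - 1) = (-2 / 3) * (-2 / 3) ^ i := by
  have h : (-(i : ℤ) - 1) = -((i + 1 : ℕ) : ℤ) := by push_cast; ring
  rw [h, zpow_neg, zpow_natCast, ← inv_pow, pow_succ']
  norm_num

theorem aux_sumA : HasSum (fun i : ℕ => (-1 / 3 : ℝ) * (-2 / 3) ^ i) (-1 / 5) := by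
  have h := (hasSum_geometric_of_abs_lt_one (r := (-2 / 3 : ℝ))
    (by rw [abs_lt]; constructor <;> norm_num)).mul_left (-1 / 3)
  have e : (-1 / 3 : ℝ) * (1 - -2 / 3)⁻¹ = -1 / 5 := by norm_num
  rw [e] at h
  exact h

theorem aux_sumB : HasSum (fun i : ℕ => (1 / 3 : ℝ) * (2 / 3) ^ i) 1 := by
  have h := (hasSum_geometric_of_abs_lt_one (r := (2 / 3 : ℝ))
    (by rw [abs_lt]; constructor <;> norm_num)).mul_left (1 / 3)
  have e : (1 / 3 : ℝ) * (1 - 2 / 3)⁻¹ = 1 := by norm_num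
  rw [e] at h
  exact h

theorem aux_bound (d i : ℕ) (hd : d ≤ 2) :
    |(1 / 2 : ℝ) * (d : ℝ) * (-3 / 2 : ℝ) ^ (-(i : ℤ) - 1) - (-1 / 3 : ℝ) * (-2 / 3) ^ i|
      ≤ (1 / 3 : ℝ) * (2 / 3) ^ i := by
  rw [aux_term]
  have h : (1 / 2 : ℝ) * (d : ℝ) * ((-2 / 3) * (-2 / 3) ^ i) - (-1 / 3 : ℝ) * (-2 / 3) ^ i
      = (1 / 3 - (d : ℝ) / 3) * (-2 / 3) ^ i := by ring
  rw [h, abs_mul, abs_pow]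
  have h2 : |(-2 / 3 : ℝ)| = 2 / 3 := by
    rw [abs_of_neg] <;> norm_num
  rw [h2]
  have hd' : (d : ℝ) ≤ 2 := by exact_mod_cast hd
  have hd0 : (0 : ℝ) ≤ d := Nat.cast_nonneg d
  gcongr
  rw [abs_le]
  constructor <;> linarith

open Classical in
/-- The digit chosen for the point `x`. -/
noncomputable def auxDigit (x : ℝ) : ℕ := if -3 / 2 * x ≤ 4 / 5 then 0 else 2

/-- The expanding map. -/
noncomputable def auxT (x : ℝ) : ℝ := -3 / 2 * x - auxDigit x / 2

theorem aux_digit_le (x : ℝ) : auxDigit x ≤ 2 := by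
  unfold auxDigit; split_ifs <;> norm_num

theorem aux_T_mem (x : ℝ) (hx : x ∈ Set.Icc (-6 / 5 : ℝ) (4 / 5)) :
    auxT x ∈ Set.Icc (-6 / 5 : ℝ) (4 / 5) := by
  obtain ⟨h1, h2⟩ := hx
  unfold auxT auxDigit
  split_ifs with h
  · constructor <;> push_cast <;> linarith
  · constructor <;> push_cast <;> linarith

theorem aux_iter_mem (x : ℝ) (hx : x ∈ Set.Icc (-6 / 5 : ℝ) (4 / 5)) (n : ℕ) :
    auxT^[n] x ∈ Set.Icc (-6 / 5 : ℝ) (4 / 5) := by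
  induction n with
  | zero => simpa using hx
  | succ n ih => rw [Function.iterate_succ_apply']; exact aux_T_mem _ ih

theorem aux_partial (x : ℝ) (n : ℕ) :
    ∑ i ∈ Finset.range n, (1 / 2 : ℝ) * (auxDigit (auxT^[i] x) : ℝ)
      * (-3 / 2 : ℝ) ^ (-(i : ℤ) - 1) = x - (-2 / 3) ^ n * auxT^[n] x := by
  induction n with
  | zero => simp
  | succ n ih =>
    rw [Finset.sum_range_succ, ih, aux_term, Function.iterate_succ_apply']
    generalize auxT^[n] x = y
    unfold auxT
    ring

/-- `Ω` equals the closed interval `[-6/5, 4/5]`. -/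
theorem Omega_eq_Icc : Omega = Set.Icc (-6 / 5 : ℝ) (4 / 5) := by
  ext x
  constructor
  · rintro ⟨d, hd, hs⟩
    have hs' := hs.sub aux_sumA
    have hu := hasSum_le (fun i => (abs_le.1 (aux_bound (d i) i (hd i))).2) hs' aux_sumB
    have hl := hasSum_le (fun i => (abs_le.1 (aux_bound (d i) i (hd i))).1) aux_sumB.neg hs'
    constructor <;> linarith
  · intro hx
    refine ⟨fun i => auxDigit (auxT^[i] x), fun i => aux_digit_le _, ?_⟩
    have hsum : Summable (fun i : ℕ => (1 / 2 : ℝ) * (auxDigit (auxT^[i] x) : ℝ)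
        * (-3 / 2 : ℝ) ^ (-(i : ℤ) - 1)) := by
      have h := (Summable.of_norm_bounded aux_sumB.summable
        (fun i => aux_bound (auxDigit (auxT^[i] x)) i (aux_digit_le _))).add aux_sumA.summable
      refine h.congr fun i => ?_
      ring
    rw [hsum.hasSum_iff_tendsto_nat]
    simp_rw [aux_partial]
    have h0 : Filter.Tendsto (fun n : ℕ => (-2 / 3 : ℝ) ^ n * auxT^[n] x) Filter.atTop
        (nhds 0) := by
      have hg : Filter.Tendsto (fun n : ℕ => (2 / 3 : ℝ) ^ n * 2) Filter.atTop (nhds 0) := by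
        simpa using (tendsto_pow_atTop_nhds_zero_of_lt_one (r := (2 / 3 : ℝ))
          (by norm_num) (by norm_num)).mul_const 2
      refine squeeze_zero_norm (fun n => ?_) hg
      obtain ⟨h1, h2⟩ := aux_iter_mem x hx n
      have h3 : |(-2 / 3 : ℝ)| = 2 / 3 := by
        rw [abs_of_neg] <;> norm_num
      rw [Real.norm_eq_abs, abs_mul, abs_pow, h3]
      gcongr
      rw [abs_le]
      constructor <;> linarith
    simpa using h0.const_sub x
end

section
/- Every real number x admits a (−3/2)-expansion: there exist k ∈ ℤ and digits d_i ∈ {0,1,2} for i ≤ k such that x = (1/2)·∑_{i=−∞}^{k} d_i·(−3/2)^i (the series taken over decreasing i converges absolutely). -/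
noncomputable def nthDigit (y : ℝ) : ℕ := if y ≤ 4 / 5 then 0 else 2

noncomputable def nthOrbit (y : ℝ) : ℕ → ℝ
  | 0 => y
  | n + 1 => (-3 / 2) * (nthOrbit y n - (nthDigit (nthOrbit y n) : ℝ) / 2)

lemma nthDigit_le (y : ℝ) : nthDigit y ≤ 2 := by
  unfold nthDigit; split_ifs <;> norm_num

lemma nthOrbit_mem (y : ℝ) (h : -(6 / 5) ≤ y ∧ y ≤ 9 / 5) (n : ℕ) :
    -(6 / 5) ≤ nthOrbit y n ∧ nthOrbit y n ≤ 9 / 5 := by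
  induction n with
  | zero => exact h
  | succ n ih =>
    obtain ⟨h1, h2⟩ := ih
    simp only [nthOrbit, nthDigit]
    split_ifs with hc
    · constructor <;> push_cast <;> linarith
    · push Not at hc
      constructor <;> push_cast <;> linarith

lemma nthOrbit_sum (y : ℝ) (n : ℕ) :
    ∑ j ∈ Finset.range n, (1 / 2 : ℝ) * (nthDigit (nthOrbit y j) : ℝ) * (-2 / 3 : ℝ) ^ j
      = y - (-2 / 3) ^ n * nthOrbit y n := by
  induction n with
  | zero => simp [nthOrbit]
  | succ n ih =>
    rw [Finset.sum_range_succ, ih, nthOrbit, pow_succ]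
    ring

lemma nthOrbit_hasSum (y : ℝ) (h : -(6 / 5) ≤ y ∧ y ≤ 9 / 5) :
    HasSum (fun j : ℕ => (1 / 2 : ℝ) * (nthDigit (nthOrbit y j) : ℝ) * (-2 / 3 : ℝ) ^ j) y := by
  have hs : Summable
      (fun j : ℕ => (1 / 2 : ℝ) * (nthDigit (nthOrbit y j) : ℝ) * (-2 / 3 : ℝ) ^ j) := by
    refine Summable.of_norm_bounded (g := fun j : ℕ => (2 / 3 : ℝ) ^ j)
      (summable_geometric_of_lt_one (by norm_num) (by norm_num)) fun j => ?_
    have hd : (nthDigit (nthOrbit y j) : ℝ) ≤ 2 := by exact_mod_cast nthDigit_le _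
    have hd0 : (0 : ℝ) ≤ (nthDigit (nthOrbit y j) : ℝ) := Nat.cast_nonneg _
    rw [norm_mul, norm_pow, Real.norm_of_nonneg (by positivity)]
    have : ‖(-2 / 3 : ℝ)‖ = 2 / 3 := by rw [Real.norm_eq_abs]; norm_num [abs_div]
    rw [this]
    have hp : (0 : ℝ) ≤ (2 / 3) ^ j := by positivity
    nlinarith
  rw [hs.hasSum_iff_tendsto_nat]
  simp_rw [nthOrbit_sum]
  have hz : Filter.Tendsto (fun n => (-2 / 3 : ℝ) ^ n * nthOrbit y n) Filter.atTop (nhds 0) := by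
    have hg : Filter.Tendsto (fun n : ℕ => (2 / 3 : ℝ) ^ n * 2) Filter.atTop (nhds 0) := by
      simpa using (tendsto_pow_atTop_nhds_zero_of_lt_one (r := (2 / 3 : ℝ))
        (by norm_num) (by norm_num)).mul_const 2
    refine squeeze_zero_norm (fun n => ?_) hg
    have : ‖(-2 / 3 : ℝ)‖ = 2 / 3 := by rw [Real.norm_eq_abs]; norm_num [abs_div]
    rw [norm_mul, norm_pow, this]
    obtain ⟨h1, h2⟩ := nthOrbit_mem y h n
    gcongr
    rw [Real.norm_eq_abs, abs_le]
    constructor <;> linarith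
  simpa using hz.const_sub y

/-- Every real number `x` admits a `(-3/2)`-expansion: there exist `k ∈ ℤ`
and digits `d i ∈ {0,1,2}` for `i ≤ k` such that
`x = (1/2)·∑_{i=-∞}^{k} d i·(-3/2)^i`, the series being taken over decreasing `i`
(indexed by `j ∈ ℕ` via `i = k - j`). -/
theorem real_has_neg_three_halves_expansion (x : ℝ) :
    ∃ (k : ℤ) (d : ℤ → ℕ), (∀ i ≤ k, d i ≤ 2) ∧
      HasSum (fun j : ℕ => (1 / 2 : ℝ) * (d (k - j) : ℝ) * (-3 / 2 : ℝ) ^ (k - (j : ℤ))) x := by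
  obtain ⟨k, hk⟩ := pow_unbounded_of_one_lt |x| (by norm_num : (1 : ℝ) < 3 / 2)
  have hb : (-3 / 2 : ℝ) ^ k ≠ 0 := by positivity
  set y : ℝ := x / (-3 / 2) ^ k with hy
  have habs : |y| ≤ 1 := by
    have : |(-3 / 2 : ℝ)| = 3 / 2 := by norm_num [abs_div]
    rw [hy, abs_div, abs_pow, this, div_le_one (by positivity)]
    exact hk.le
  have h := abs_le.1 habs
  have hs := (nthOrbit_hasSum y ⟨by linarith [h.1], by linarith [h.2]⟩).mul_left
    ((-3 / 2 : ℝ) ^ k)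
  refine ⟨k, fun i => nthDigit (nthOrbit y ((k : ℤ) - i).toNat), fun i _ => nthDigit_le _, ?_⟩
  have hx : (-3 / 2 : ℝ) ^ k * y = x := by rw [hy]; field_simp
  rw [hx] at hs
  refine (congrArg (fun f => HasSum f x) (funext fun j => ?_)).mpr hs
  beta_reduce
  have e : ((k : ℤ) - ((k : ℤ) - (j : ℤ))).toNat = j := by simp
  rw [e, zpow_sub₀ (by norm_num), zpow_natCast, zpow_natCast]
  have e2 : (-2 / 3 : ℝ) ^ j = ((-3 / 2 : ℝ) ^ j)⁻¹ := by rw [← inv_pow]; norm_num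
  rw [e2]
  ring
end

section
/- The tile F satisfies the set equation (−3/2)·F = F ∪ (F + φ(1/2)) ∪ (F + φ(1)), where the action of −3/2 and the translations are taken componentwise in K = ℝ × ℚ₂. -/
/-- The diagonal embedding `φ : ℚ → K = ℝ × ℚ₂`, `φ(z) = (z, z)`. -/
noncomputable def phi (z : ℚ) : ℝ × ℚ_[2] := ((z : ℝ), (z : ℚ_[2]))

/-- The tile `F ⊂ K = ℝ × ℚ₂`: all points of the form
`(1/2)·∑_{i=1}^{∞} d_{-i}·φ(1)·(-3/2)^{-i}` with digits `d_{-i} ∈ {0,1,2}`, the series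
converging in `K` since multiplication by `(-3/2)⁻¹` contracts both coordinates. -/
noncomputable def Ftile : Set (ℝ × ℚ_[2]) :=
  {x : ℝ × ℚ_[2] | ∃ d : ℕ → ℕ, (∀ i, d i ≤ 2) ∧
    HasSum (fun i : ℕ => phi ((1 / 2 : ℚ) * (d i : ℚ) * (-3 / 2 : ℚ) ^ (-(i : ℤ) - 1))) x}


theorem phi_mul (a b : ℚ) : phi (a * b) = phi a * phi b := by
  simp [phi]

theorem phi_zero : phi 0 = 0 := by
  simp [phi]

/-- The summand attached to a digit sequence. -/
noncomputable def fterm (d : ℕ → ℕ) (i : ℕ) : ℝ × ℚ_[2] :=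
  phi ((1 / 2 : ℚ) * (d i : ℚ) * (-3 / 2 : ℚ) ^ (-(i : ℤ) - 1))

theorem fterm_succ (d : ℕ → ℕ) (i : ℕ) :
    phi (-3 / 2) * fterm d (i + 1) = fterm (fun j => d (j + 1)) i := by
  unfold fterm
  rw [← phi_mul]
  congr 1
  have h : (-3 / 2 : ℚ) ^ (-(i : ℤ) - 1) = (-3 / 2) * (-3 / 2 : ℚ) ^ (-((i + 1 : ℕ) : ℤ) - 1) := by
    rw [← zpow_one_add₀ (by norm_num)]
    congr 1
    push_cast
    ring
  rw [h]
  ring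

theorem fterm_zero (d : ℕ → ℕ) :
    phi (-3 / 2) * fterm d 0 = phi ((d 0 : ℚ) / 2) := by
  unfold fterm
  rw [← phi_mul]
  congr 1
  norm_num
  ring

theorem phi_inv_mul (x : ℝ × ℚ_[2]) : phi (-3 / 2)⁻¹ * (phi (-3 / 2) * x) = x := by
  rw [← mul_assoc, ← phi_mul, inv_mul_cancel₀ (by norm_num)]
  ext <;> simp [phi]

theorem phi_mul_inv (x : ℝ × ℚ_[2]) : phi (-3 / 2) * (phi (-3 / 2)⁻¹ * x) = x := by
  rw [← mul_assoc, ← phi_mul, mul_inv_cancel₀ (by norm_num)]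
  ext <;> simp [phi]

theorem hasSum_fterm_iff (d : ℕ → ℕ) (x : ℝ × ℚ_[2]) :
    HasSum (fterm d) x ↔
      HasSum (fterm (fun j => d (j + 1))) (phi (-3 / 2) * x - phi ((d 0 : ℚ) / 2)) := by
  have h1 : HasSum (fterm d) x ↔
      HasSum (fun i => phi (-3 / 2) * fterm d i) (phi (-3 / 2) * x) := by
    constructor
    · intro h
      exact h.mul_left _
    · intro h
      have := h.mul_left (phi (-3 / 2)⁻¹)
      simpa only [phi_inv_mul] using this
  rw [h1, ← hasSum_nat_add_iff' 1]
  simp only [fterm_succ, Finset.sum_range_one, fterm_zero]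

theorem mem_Ftile_iff (x : ℝ × ℚ_[2]) :
    x ∈ Ftile ↔ ∃ k : ℕ, k ≤ 2 ∧ phi (-3 / 2) * x - phi ((k : ℚ) / 2) ∈ Ftile := by
  constructor
  · rintro ⟨d, hd, h⟩
    exact ⟨d 0, hd 0, fun j => d (j + 1), fun i => hd _, (hasSum_fterm_iff d x).1 h⟩
  · rintro ⟨k, hk, d, hd, h⟩
    let e : ℕ → ℕ := fun i => Nat.casesOn i k d
    have he : HasSum (fterm e) x := by
      rw [hasSum_fterm_iff]
      exact h
    refine ⟨e, ?_, he⟩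
    rintro (_ | i)
    · exact hk
    · exact hd i

theorem Ftile_set_equation :
    (fun p : ℝ × ℚ_[2] => ((-3 / 2 : ℝ) * p.1, (-3 / 2 : ℚ_[2]) * p.2)) '' Ftile =
      Ftile ∪ (fun x => x + phi (1 / 2)) '' Ftile ∪ (fun x => x + phi 1) '' Ftile := by
  have hf : (fun p : ℝ × ℚ_[2] => ((-3 / 2 : ℝ) * p.1, (-3 / 2 : ℚ_[2]) * p.2)) =
      fun p => phi (-3 / 2) * p := by
    funext p
    ext <;> simp [phi]
  rw [hf]
  ext y
  constructor
  · rintro ⟨x, hx, rfl⟩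
    obtain ⟨k, hk, h⟩ := (mem_Ftile_iff x).1 hx
    interval_cases k
    · left; left
      simpa [phi_zero] using h
    · left; right
      exact ⟨_, h, by simp⟩
    · right
      exact ⟨_, h, by simp⟩
  · intro hy
    refine ⟨phi (-3 / 2)⁻¹ * y, (mem_Ftile_iff _).2 ?_, phi_mul_inv y⟩
    rw [phi_mul_inv]
    rcases hy with (hy | ⟨x, hx, rfl⟩) | ⟨x, hx, rfl⟩
    · exact ⟨0, by norm_num, by simpa [phi_zero] using hy⟩
    · exact ⟨1, by norm_num, by simpa using hx⟩
    · exact ⟨2, by norm_num, by simpa using hx⟩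
end

section
/- F is the unique nonempty compact subset of K = ℝ × ℚ₂ satisfying A = (−2/3)·A ∪ (−2/3)·(A + φ(1/2)) ∪ (−2/3)·(A + φ(1)); that is, any nonempty compact A ⊆ K satisfying this set equation equals F. -/
/-- The contraction constant `-2/3` as an element of the ring `ℝ × ℚ₂`. -/
noncomputable def cK : ℝ × ℚ_[2] := ((-2 / 3 : ℝ), (-2 / 3 : ℚ_[2]))

lemma cK_norm : ‖cK‖ < 1 := by
  rw [Prod.norm_def, max_lt_iff]
  constructor
  · simp only [cK, Real.norm_eq_abs]
    rw [abs_lt]; constructor <;> norm_num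
  · have h2 : ‖(2 : ℚ_[2])‖ = 2⁻¹ := by
      simpa using Padic.norm_p (p := 2)
    have h3 : ‖(3 : ℚ_[2])‖ = 1 := by
      have := (Padic.norm_natCast_eq_one_iff (p := 2) (n := 3)).2 (by norm_num)
      simpa using this
    simp only [cK, norm_div, norm_neg, h2, h3]
    norm_num

lemma term_eq (d i : ℕ) :
    phi ((1 / 2 : ℚ) * (d : ℚ) * (-3 / 2 : ℚ) ^ (-(i : ℤ) - 1)) =
      cK ^ (i + 1) * ((d : ℝ × ℚ_[2]) * phi (1 / 2)) := by
  have h : (-3 / 2 : ℚ) ^ (-(i : ℤ) - 1) = (-2 / 3 : ℚ) ^ (i + 1) := by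
    have : -(i : ℤ) - 1 = -((i + 1 : ℕ) : ℤ) := by push_cast; ring
    rw [this, zpow_neg, zpow_natCast, ← inv_pow]
    norm_num
  rw [h]
  ext
  · simp only [phi, cK, Prod.fst_mul, Prod.pow_fst, Prod.fst_natCast]
    push_cast; ring
  · simp only [phi, cK, Prod.snd_mul, Prod.pow_snd, Prod.snd_natCast]
    push_cast; ring

lemma cK_summable (d : ℕ → ℕ) (hd : ∀ i, d i ≤ 2) :
    Summable (fun i : ℕ => cK ^ (i + 1) * ((d i : ℝ × ℚ_[2]) * phi (1 / 2))) := by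
  refine Summable.of_norm_bounded
    (g := fun i : ℕ => ‖cK‖ ^ i * (‖cK‖ * (2 * ‖phi (1 / 2)‖)))
    ((summable_geometric_of_lt_one (norm_nonneg _) cK_norm).mul_right _) (fun i => ?_)
  have h1 : ‖(d i : ℝ × ℚ_[2]) * phi (1 / 2)‖ ≤ 2 * ‖phi (1 / 2)‖ := by
    rw [← nsmul_eq_mul]
    refine (norm_nsmul_le).trans ?_
    have : (d i : ℝ) ≤ 2 := by exact_mod_cast hd i
    gcongr
  calc _ ≤ ‖cK ^ (i + 1)‖ * ‖(d i : ℝ × ℚ_[2]) * phi (1 / 2)‖ := norm_mul_le _ _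
    _ ≤ ‖cK‖ ^ (i + 1) * (2 * ‖phi (1 / 2)‖) := by
        gcongr
        exact norm_pow_le' _ (Nat.succ_pos i)
    _ = _ := by ring

lemma cK_tendsto (a : ℕ → ℝ × ℚ_[2]) (C : ℝ) (ha : ∀ n, ‖a n‖ ≤ C) :
    Filter.Tendsto (fun n => cK ^ n * a n) Filter.atTop (nhds 0) := by
  have h := tendsto_pow_atTop_nhds_zero_of_norm_lt_one cK_norm
  have h2 : Filter.Tendsto (fun n => ‖cK ^ n‖ * C) Filter.atTop (nhds 0) := by
    simpa using h.norm.mul_const C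
  refine squeeze_zero_norm (fun n => ?_) h2
  exact (norm_mul_le _ _).trans (by gcongr; exact ha n)

/-- `F` is the unique nonempty compact subset of `K = ℝ × ℚ₂` satisfying
`A = (-2/3)·A ∪ (-2/3)·(A + φ(1/2)) ∪ (-2/3)·(A + φ(1))`: any nonempty compact `A ⊆ K`
satisfying this set equation equals `F`. -/
theorem Ftile_unique_attractor (A : Set (ℝ × ℚ_[2])) (hne : A.Nonempty) (hc : IsCompact A)
    (heq : A =
        (fun p : ℝ × ℚ_[2] => ((-2 / 3 : ℝ) * p.1, (-2 / 3 : ℚ_[2]) * p.2)) '' A ∪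
        (fun p : ℝ × ℚ_[2] => ((-2 / 3 : ℝ) * p.1, (-2 / 3 : ℚ_[2]) * p.2)) ''
          ((fun x => x + phi (1 / 2)) '' A) ∪
        (fun p : ℝ × ℚ_[2] => ((-2 / 3 : ℝ) * p.1, (-2 / 3 : ℚ_[2]) * p.2)) ''
          ((fun x => x + phi 1) '' A)) :
    A = Ftile := by
  have hmem : ∀ x, x ∈ A ↔ ∃ a ∈ A, ∃ d : ℕ, d ≤ 2 ∧
      x = cK * (a + (d : ℝ × ℚ_[2]) * phi (1 / 2)) := by
    have hf : ∀ p : ℝ × ℚ_[2],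
        ((-2 / 3 : ℝ) * p.1, (-2 / 3 : ℚ_[2]) * p.2) = cK * p := fun p => rfl
    have h1 : phi 1 = ((2 : ℕ) : ℝ × ℚ_[2]) * phi (1 / 2) := by
      ext <;> simp [phi]
    intro x
    constructor
    · intro hx
      rw [heq] at hx
      simp only [hf] at hx
      rcases hx with (⟨a, ha, rfl⟩ | ⟨_, ⟨a, ha, rfl⟩, rfl⟩) | ⟨_, ⟨a, ha, rfl⟩, rfl⟩
      · exact ⟨a, ha, 0, by norm_num, by simp⟩
      · exact ⟨a, ha, 1, by norm_num, by simp⟩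
      · exact ⟨a, ha, 2, le_rfl, by simp only [h1]⟩
    · rintro ⟨a, ha, d, hd, rfl⟩
      rw [heq]
      simp only [hf]
      interval_cases d
      · exact Or.inl (Or.inl ⟨a, ha, by simp⟩)
      · exact Or.inl (Or.inr ⟨_, ⟨a, ha, rfl⟩, by simp⟩)
      · exact Or.inr ⟨_, ⟨a, ha, rfl⟩, by simp only [h1]⟩
  clear heq
  obtain ⟨C, hC⟩ := hc.isBounded.exists_norm_le
  ext x
  simp only [Ftile, Set.mem_ofPred_eq, term_eq]
  constructor
  · intro hx
    have hstep : ∀ y : A, ∃ z : A, ∃ d : ℕ, d ≤ 2 ∧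
        (y : ℝ × ℚ_[2]) = cK * (z + (d : ℝ × ℚ_[2]) * phi (1 / 2)) := fun y => by
      obtain ⟨a, ha, d, hd, h⟩ := (hmem y).1 y.2
      exact ⟨⟨a, ha⟩, d, hd, h⟩
    choose g e he hg using hstep
    let s : ℕ → A := fun n => g^[n] ⟨x, hx⟩
    have hs : ∀ n, s (n + 1) = g (s n) := fun n => Function.iterate_succ_apply' _ _ _
    refine ⟨fun i => e (s i), fun i => he _, ?_⟩
    have hpart : ∀ n, ∑ i ∈ Finset.range n,
        cK ^ (i + 1) * (((e (s i) : ℕ) : ℝ × ℚ_[2]) * phi (1 / 2)) = x - cK ^ n * s n := by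
      intro n
      induction n with
      | zero => simp [s]
      | succ n ih =>
        rw [Finset.sum_range_succ, ih, hs]
        have := hg (s n)
        generalize (s n : ℝ × ℚ_[2]) = y at *
        rw [this]; ring
    have hsum := cK_summable (fun i => e (s i)) (fun i => he _)
    refine (hsum.hasSum_iff_tendsto_nat).2 ?_
    simp only [hpart]
    simpa using (cK_tendsto (fun n => s n) C (fun n => hC _ (s n).2)).const_sub x
  · rintro ⟨d, hd, hsum⟩
    obtain ⟨a, ha⟩ := hne
    have hin : ∀ n (b : ℝ × ℚ_[2]), b ∈ A → ∑ i ∈ Finset.range n,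
        cK ^ (i + 1) * ((d i : ℝ × ℚ_[2]) * phi (1 / 2)) + cK ^ n * b ∈ A := by
      intro n
      induction n with
      | zero => intro b hb; simpa using hb
      | succ n ih =>
        intro b hb
        have := ih _ ((hmem _).2 ⟨b, hb, d n, hd n, rfl⟩)
        convert this using 1
        rw [Finset.sum_range_succ]; ring
    have ht := hsum.tendsto_sum_nat.add (cK_tendsto (fun _ => a) C (fun _ => hC a ha))
    rw [add_zero] at ht
    exact hc.isClosed.mem_of_tendsto ht (Filter.Eventually.of_forall fun n => hin n a ha)
end

section
/- The collection {F + φ(z) : z ∈ ℤ[1/2]} is a tiling of K: it covers K, and for any two distinct z, z' ∈ ℤ[1/2] the overlap has measure zero, μ((F + φ(z)) ∩ (F + φ(z'))) = 0; moreover the boundary of F satisfies μ(∂F) = 0, so μ-almost every point of K lies in exactly one tile. -/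
open MeasureTheory

/-- A dyadic rational: an element of `ℤ[1/2] = {a/2^ℓ : a ∈ ℤ, ℓ ∈ ℕ}`. -/
def IsDyadic (z : ℚ) : Prop := ∃ (a : ℤ) (ℓ : ℕ), z = (a : ℚ) / 2 ^ ℓ

namespace FT

noncomputable def A (x : ℝ × ℚ_[2]) : ℝ × ℚ_[2] := ((-3/2) * x.1, (-3/2) * x.2)
noncomputable def B (x : ℝ × ℚ_[2]) : ℝ × ℚ_[2] := ((-2/3) * x.1, (-2/3) * x.2)

lemma AB (x) : A (B x) = x := by
  ext <;> simp only [A, B] <;> field_simp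
lemma BA (x) : B (A x) = x := by
  ext <;> simp only [A, B] <;> field_simp
lemma A_add (x y) : A (x + y) = A x + A y := by ext <;> simp [A, mul_add]
lemma A_sub (x y) : A (x - y) = A x - A y := by ext <;> simp [A, mul_sub]
lemma B_add (x y) : B (x + y) = B x + B y := by ext <;> simp [B, mul_add]
lemma B_sub (x y) : B (x - y) = B x - B y := by ext <;> simp [B, mul_sub]
lemma A_phi (q) : A (phi q) = phi (-3/2 * q) := by ext <;> simp [A, phi]
lemma phi_add (p q) : phi (p + q) = phi p + phi q := by ext <;> simp [phi]
lemma phi_sub (p q) : phi (p - q) = phi p - phi q := by ext <;> simp [phi]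
lemma phi_zero : phi 0 = 0 := by ext <;> simp [phi]
lemma cont_A : Continuous A := by unfold A; fun_prop
lemma cont_B : Continuous B := by unfold B; fun_prop

noncomputable def Ah : (ℝ × ℚ_[2]) →+ (ℝ × ℚ_[2]) := ⟨⟨A, by ext <;> simp [A]⟩, A_add⟩
noncomputable def Bh : (ℝ × ℚ_[2]) →+ (ℝ × ℚ_[2]) := ⟨⟨B, by ext <;> simp [B]⟩, B_add⟩

lemma norm2 : ‖(2 : ℚ_[2])‖ = 1/2 := by
  have := Padic.norm_p (p := 2); push_cast at this; rw [this]; norm_num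
lemma norm3 : ‖(3 : ℚ_[2])‖ = 1 := by
  have := (Padic.norm_natCast_eq_one_iff (p := 2) (n := 3)).2 (by norm_num)
  exact_mod_cast this

lemma B_norm (x) : ‖B x‖ ≤ 2/3 * ‖x‖ := by
  have h1 : ‖x.1‖ ≤ ‖x‖ := norm_fst_le x
  have h2 : ‖x.2‖ ≤ ‖x‖ := norm_snd_le x
  have h0 : 0 ≤ ‖x‖ := norm_nonneg x
  rw [Prod.norm_def]
  apply max_le
  · simp only [B, norm_mul]
    have : ‖(-2/3 : ℝ)‖ = 2/3 := by rw [Real.norm_eq_abs, abs_of_neg] <;> norm_num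
    rw [this]; gcongr
  · simp only [B, norm_mul, norm_div, norm_neg, norm2, norm3]
    have : 0 ≤ ‖x.2‖ := norm_nonneg _
    linarith

noncomputable def term (d : ℕ → ℕ) (i : ℕ) : ℝ × ℚ_[2] :=
  phi ((1 / 2 : ℚ) * (d i : ℚ) * (-3 / 2 : ℚ) ^ (-(i : ℤ) - 1))

lemma mem_F (x) : x ∈ Ftile ↔ ∃ d : ℕ → ℕ, (∀ i, d i ≤ 2) ∧ HasSum (term d) x := Iff.rfl

lemma A_term (d : ℕ → ℕ) (i : ℕ) : A (term d (i+1)) = term (fun i => d (i+1)) i := by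
  simp only [term, A_phi]
  congr 1
  have : (-3/2 : ℚ) ^ (-(i:ℤ) - 1) = (-3/2) * (-3/2 : ℚ) ^ (-((i+1 : ℕ):ℤ) - 1) := by
    rw [← zpow_one_add₀ (by norm_num)]; congr 1; push_cast; ring
  rw [this]; ring

lemma A_term_zero (d : ℕ → ℕ) : A (term d 0) = phi (d 0 / 2) := by
  simp only [term, A_phi]
  congr 1
  norm_num
  ring

lemma self_sim (x) : x ∈ Ftile ↔ ∃ d : ℕ, d ≤ 2 ∧ A x - phi (d / 2) ∈ Ftile := by
  constructor
  · rintro ⟨d, hd, h⟩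
    change HasSum (term d) x at h
    refine ⟨d 0, hd 0, fun i => d (i+1), fun i => hd _, ?_⟩
    change HasSum (term _) _
    rw [← hasSum_nat_add_iff' 1] at h
    have := h.map Ah cont_A
    simp only [Finset.range_one, Finset.sum_singleton] at this
    convert this using 1
    · ext1 i; exact (A_term d i).symm
    · change _ = A _
      rw [A_sub, A_term_zero]
  · rintro ⟨d0, hd0, d, hd, h⟩
    change HasSum (term d) _ at h
    let e : ℕ → ℕ := fun i => Nat.casesOn i d0 d
    refine ⟨e, ?_, ?_⟩
    · intro i; cases i; exacts [hd0, hd _]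
    change HasSum (term e) _
    have := h.map Bh cont_B
    have hfun : (fun n => term e (n + 1)) = Bh ∘ term d := by
      funext i; change _ = B _
      rw [← BA (term e _), A_term]
    have hval : x - term e 0 = Bh (A x - phi (d0 / 2)) := by
      change _ = B _
      rw [B_sub, BA, ← BA (term e 0), A_term_zero]
      rfl
    rw [← hfun, ← hval] at this
    refine (hasSum_nat_add_iff' 1).1 ?_
    rw [Finset.range_one, Finset.sum_singleton]
    exact this

lemma self_sim' (x) : B x ∈ Ftile ↔ ∃ d : ℕ, d ≤ 2 ∧ x - phi (d / 2) ∈ Ftile := by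
  rw [self_sim, AB]

lemma B_phi_half_norm (d : ℕ) (h : d ≤ 2) : ‖phi (d/2)‖ ≤ 2 := by
  rw [Prod.norm_def]
  have h' : (d:ℝ) ≤ 2 := by exact_mod_cast h
  apply max_le
  · simp [phi]; linarith
  · have : ‖((d:ℤ) : ℚ_[2])‖ ≤ 1 := Padic.norm_int_le_one d
    simp only [phi]; push_cast; rw [norm_div, norm2]
    push_cast at this
    linarith

lemma term_eq (d : ℕ → ℕ) (i : ℕ) : term d i = B^[i+1] (phi (d i / 2)) := by
  induction i generalizing d with
  | zero => rw [← A_term_zero]; simp [BA]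
  | succ n ih =>
    rw [← BA (term d (n+1)), A_term, ih, ← Function.iterate_succ_apply' B]

lemma B_iter_norm (n : ℕ) (x) : ‖B^[n] x‖ ≤ (2/3)^n * ‖x‖ := by
  induction n with
  | zero => simp
  | succ n ih =>
    rw [Function.iterate_succ_apply']
    have := B_norm (B^[n] x)
    rw [pow_succ]; linarith

lemma term_norm (d : ℕ → ℕ) (h : ∀ i, d i ≤ 2) (i : ℕ) : ‖term d i‖ ≤ (2/3)^i * (2/3*2) := by
  rw [term_eq]
  refine (B_iter_norm _ _).trans ?_
  rw [pow_succ, mul_assoc]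
  gcongr
  exact B_phi_half_norm _ (h i)

lemma summable_bd : Summable (fun i : ℕ => ((2/3:ℝ))^i * (2/3*2)) :=
  (summable_geometric_of_lt_one (by norm_num) (by norm_num)).mul_right _

lemma F_eq : Ftile = Set.range (fun d : ℕ → Fin 3 => ∑' i, term (fun i => d i) i) := by
  ext x
  rw [mem_F]
  constructor
  · rintro ⟨d, hd, h⟩
    exact ⟨fun i => ⟨d i, Nat.lt_succ_of_le (hd i)⟩, h.tsum_eq⟩
  · rintro ⟨d, rfl⟩
    have hd : ∀ i, (d i : ℕ) ≤ 2 := fun i => Nat.le_of_lt_succ (d i).2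
    exact ⟨fun i => d i, hd, (Summable.of_norm_bounded summable_bd (term_norm _ hd)).hasSum⟩

lemma F_compact : IsCompact Ftile := by
  rw [F_eq]
  apply isCompact_range
  refine continuous_tsum (u := fun i : ℕ => ((2/3:ℝ))^i * (2/3*2)) ?_ summable_bd ?_
  · intro i
    have : Continuous (fun k : Fin 3 =>
      phi ((1 / 2 : ℚ) * ((k:ℕ) : ℚ) * (-3 / 2 : ℚ) ^ (-(i : ℤ) - 1))) := continuous_of_discreteTopology
    exact this.comp (continuous_apply i)
  · intro i d
    exact term_norm _ (fun i => Nat.le_of_lt_succ (d i).2) i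

lemma zero_mem : (0 : ℝ × ℚ_[2]) ∈ Ftile := by
  refine ⟨fun _ => 0, by simp, ?_⟩
  simp [phi_zero, hasSum_zero]

/-- finite expansions -/
def Rep : ℕ → ℚ → Prop
  | 0, z => z = 0
  | n+1, z => ∃ d : ℕ, d ≤ 2 ∧ ∃ w, Rep n w ∧ z = d / 2 + -3/2 * w

lemma Rep.succ {n z} (h : Rep n z) : Rep (n+1) z := by
  induction n generalizing z with
  | zero => exact ⟨0, by norm_num, 0, rfl, by rw [show z = 0 from h]; simp⟩
  | succ n ih =>
    obtain ⟨d, hd, w, hw, e⟩ := h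
    exact ⟨d, hd, w, ih hw, e⟩

lemma Rep.mono {n m z} (h : Rep n z) (hnm : n ≤ m) : Rep m z := by
  induction hnm with
  | refl => exact h
  | step _ ih => exact ih.succ

lemma Rep.step {z w : ℚ} (d : ℕ) (hd : d ≤ 2) (h : ∃ n, Rep n w) (e : z = d / 2 + -3/2 * w) :
    ∃ n, Rep n z := by
  obtain ⟨n, h⟩ := h
  exact ⟨n+1, d, hd, w, h, e⟩

lemma rep_int (k : ℕ) : ∀ z : ℤ, z.natAbs ≤ k → ∃ n, Rep n (z : ℚ) := by
  have r0 : ∃ n, Rep n 0 := ⟨0, rfl⟩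
  have r1 : ∃ n, Rep n 1 := Rep.step 2 (by norm_num) r0 (by norm_num)
  have rm1 : ∃ n, Rep n (-1) := Rep.step 1 (by norm_num) r1 (by norm_num)
  have r2 : ∃ n, Rep n 2 := Rep.step 1 (by norm_num) rm1 (by norm_num)
  have rm2 : ∃ n, Rep n (-2) := Rep.step 2 (by norm_num) r2 (by norm_num)
  induction k with
  | zero => intro z hz; have : z = 0 := by omega
            subst this; simpa using r0
  | succ k ih =>
    intro z hz
    by_cases hs : z.natAbs ≤ 2
    · have : z = 0 ∨ z = 1 ∨ z = -1 ∨ z = 2 ∨ z = -2 := by omega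
      rcases this with rfl | rfl | rfl | rfl | rfl <;> push_cast <;> assumption
    · obtain ⟨w, d, hd, hw⟩ : ∃ w : ℤ, ∃ d : ℕ, d ≤ 2 ∧ 2 * z = d - 3 * w :=
        ⟨- (2 * z / 3), (2 * z % 3).toNat, by omega, by omega⟩
      refine Rep.step d hd (ih w (by omega)) ?_
      have : (2 * z : ℚ) = d - 3 * w := by exact_mod_cast hw
      linarith

lemma exists_digit (a : ℤ) (l : ℕ) : ∃ d : ℕ, d ≤ 2 ∧ ∃ b : ℤ, (d:ℤ) * 2 ^ l - a = 3 * b := by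
  induction l generalizing a with
  | zero => exact ⟨(a % 3).toNat, by omega, -(a/3), by omega⟩
  | succ l ih =>
    obtain ⟨d, hd, b, h⟩ := ih (2 * a)
    refine ⟨d, hd, 2 * b + a, ?_⟩
    rw [pow_succ]; linarith

lemma dyadic_step (a : ℤ) (l : ℕ) : ∃ d : ℕ, d ≤ 2 ∧ ∃ b : ℤ,
    (a : ℚ) / 2 ^ (l+1) = d / 2 + -3/2 * (b / 2 ^ l) := by
  obtain ⟨d, hd, b, h⟩ := exists_digit a l
  refine ⟨d, hd, b, ?_⟩
  have h' : (d:ℚ) * 2 ^ l - a = 3 * b := by exact_mod_cast h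
  have : (a:ℚ) = d * 2 ^ l - 3 * b := by linarith
  rw [this, pow_succ]; field_simp; ring

lemma dyadic_digit {z : ℚ} (h : IsDyadic z) : ∃ d : ℕ, d ≤ 2 ∧ ∃ w, IsDyadic w ∧
    z = d / 2 + -3/2 * w := by
  obtain ⟨a, l, rfl⟩ := h
  obtain ⟨d, hd, b, h⟩ := dyadic_step (2 * a) l
  refine ⟨d, hd, b / 2^l, ⟨b, l, rfl⟩, ?_⟩
  rw [← h, pow_succ]; push_cast; field_simp

lemma rep_dyadic {z : ℚ} (h : IsDyadic z) : ∃ n, Rep n z := by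
  obtain ⟨a, l, rfl⟩ := h
  induction l generalizing a with
  | zero => simpa using rep_int _ a le_rfl
  | succ l ih =>
    obtain ⟨d, hd, b, h⟩ := dyadic_step a l
    exact Rep.step d hd (ih b) h

lemma dyadic_add {z w : ℚ} (hz : IsDyadic z) (hw : IsDyadic w) : IsDyadic (z + w) := by
  obtain ⟨a, l, rfl⟩ := hz
  obtain ⟨b, m, rfl⟩ := hw
  refine ⟨a * 2 ^ m + b * 2 ^ l, l + m, ?_⟩
  push_cast; rw [pow_add]; field_simp

lemma dyadic_int (k : ℤ) : IsDyadic k := ⟨k, 0, by simp⟩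

/-- discreteness -/
lemma finite_dyadic (R : ℝ) : {z : ℚ | IsDyadic z ∧ ‖phi z‖ ≤ R}.Finite := by
  obtain ⟨m, hm⟩ : ∃ m : ℕ, R ≤ 2 ^ m := (pow_unbounded_of_one_lt R (by norm_num)).imp fun _ => le_of_lt
  have hfin : ((fun k : ℤ => (k : ℚ) / 2 ^ m) '' Set.Icc (-(2 ^ m * 2 ^ m)) (2 ^ m * 2 ^ m)).Finite :=
    (Set.finite_Icc _ _).image _
  apply hfin.subset
  rintro z ⟨⟨a, l, rfl⟩, hz⟩
  have h1 := (norm_fst_le _).trans (hz.trans hm)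
  have h2 := (norm_snd_le _).trans (hz.trans hm)
  simp only [phi] at h1 h2
  push_cast at h1 h2
  have hdvd : ((2:ℕ):ℤ) ^ l ∣ a * 2 ^ m := by
    rw [← Padic.norm_int_le_pow_iff_dvd]
    push_cast
    rw [norm_mul, norm_pow, norm2]
    rw [norm_div, norm_pow, norm2, div_le_iff₀ (by positivity)] at h2
    calc _ ≤ (2 ^ m * (1/2)^l) * (1/2:ℝ)^m := by gcongr
      _ = _ := by
        rw [zpow_neg, zpow_natCast]; simp only [one_div, inv_pow]; field_simp
  obtain ⟨k, hk⟩ := hdvd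
  have hk' : (a : ℚ) * 2 ^ m = 2 ^ l * k := by exact_mod_cast hk
  have hzk : (a : ℚ) / 2 ^ l = k / 2 ^ m := by field_simp; linarith
  have hzk' : (a : ℝ) / 2 ^ l = k / 2 ^ m := by exact_mod_cast congrArg (fun q : ℚ => (q : ℝ)) hzk
  refine ⟨k, ?_, hzk.symm⟩
  rw [hzk', Real.norm_eq_abs, abs_div, abs_of_pos (by positivity : (0:ℝ) < 2 ^ m),
    div_le_iff₀ (by positivity), abs_le] at h1
  constructor
  · exact_mod_cast h1.1
  · exact_mod_cast h1.2

lemma exists_nat_near (u : ℚ_[2]) (hu : ‖u‖ ≤ 1) (m : ℕ) : ∃ k : ℕ, ‖u - k‖ ≤ (1/2)^m := by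
  let v : ℤ_[2] := ⟨u, hu⟩
  have := (PadicInt.norm_le_pow_iff_mem_span_pow _ m).2 (PadicInt.appr_spec m v)
  refine ⟨v.appr m, ?_⟩
  rw [PadicInt.norm_def] at this
  push_cast at this
  rw [zpow_neg, zpow_natCast] at this
  rw [one_div, inv_pow]
  exact this

lemma near_lattice (x : ℝ × ℚ_[2]) : ∃ z, IsDyadic z ∧ ‖x - phi z‖ ≤ 1 := by
  obtain ⟨m, hm⟩ : ∃ m : ℕ, ‖x.2‖ ≤ 2 ^ m := (pow_unbounded_of_one_lt _ (by norm_num)).imp fun _ => le_of_lt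
  obtain ⟨k, hk⟩ := exists_nat_near (2 ^ m * x.2) (by
    rw [norm_mul, norm_pow, norm2]
    calc _ ≤ (1/2:ℝ)^m * 2^m := by gcongr
      _ = 1 := by rw [← mul_pow]; norm_num) m
  have hq : ‖x.2 - (((k:ℤ):ℚ) / 2 ^ m : ℚ)‖ ≤ 1 := by
    have : x.2 - (((k:ℤ):ℚ) / 2 ^ m : ℚ) = (2 ^ m * x.2 - k) / 2 ^ m := by
      push_cast
      field_simp
    rw [this, norm_div, norm_pow, norm2, div_le_one (by positivity)]
    exact hk
  set q : ℚ := ((k:ℤ):ℚ) / 2 ^ m with hqd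
  refine ⟨q + (⌊x.1 - q⌋ : ℤ), dyadic_add ⟨k, m, hqd⟩ (dyadic_int _), ?_⟩
  rw [Prod.norm_def]
  apply max_le
  · simp only [phi, Prod.fst_sub]
    push_cast
    rw [← sub_sub, Real.norm_eq_abs, abs_of_nonneg (by linarith [Int.floor_le (x.1 - q)])]
    linarith [Int.lt_floor_add_one (x.1 - q)]
  · simp only [phi, Prod.snd_sub]
    push_cast
    rw [← sub_sub]
    have := Padic.nonarchimedean (x.2 - (q : ℚ_[2])) (-((⌊x.1 - q⌋ : ℤ) : ℚ_[2]))
    rw [← sub_eq_add_neg, norm_neg] at this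
    exact this.trans (max_le hq (Padic.norm_int_le_one _))

/-- tile -/
def T (z : ℚ) : Set (ℝ × ℚ_[2]) := {x | x - phi z ∈ Ftile}

lemma image_eq (z : ℚ) : (fun y => y + phi z) '' Ftile = T z := by
  ext x; constructor
  · rintro ⟨y, hy, rfl⟩; simpa [T] using hy
  · intro h; exact ⟨x - phi z, h, by simp⟩

lemma T_closed (z : ℚ) : IsClosed (T z) :=
  F_compact.isClosed.preimage (continuous_id.sub continuous_const)

lemma T_locallyFinite (P : ℚ → Prop) (hP : ∀ z, P z → IsDyadic z) :
    LocallyFinite (fun z : {z // P z} => T z) := by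
  intro x
  obtain ⟨C, hC⟩ := F_compact.isBounded.exists_norm_le
  refine ⟨Metric.ball x 1, Metric.ball_mem_nhds x one_pos, ?_⟩
  have := (finite_dyadic (C + ‖x‖ + 1)).preimage (f := fun z : {z // P z} => (z:ℚ))
    Subtype.val_injective.injOn
  apply this.subset
  rintro ⟨z, hz⟩ ⟨y, hy, hyb⟩
  refine ⟨hP z hz, ?_⟩
  have h1 : ‖y - phi z‖ ≤ C := hC _ hy
  have h2 : ‖y - x‖ < 1 := by rwa [← dist_eq_norm]
  have : phi z = x + (y - x) - (y - phi z) := by abel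
  change ‖phi z‖ ≤ _
  rw [this]
  have := norm_sub_le (x + (y - x)) (y - phi z)
  have := norm_add_le x (y - x)
  linarith

lemma approx (n : ℕ) : ∀ x, ∃ z, IsDyadic z ∧ ∃ y ∈ T z, ‖x - y‖ ≤ (2/3)^n := by
  induction n with
  | zero =>
    intro x
    obtain ⟨z, hz, h⟩ := near_lattice x
    exact ⟨z, hz, phi z, by simp [T, zero_mem], by simpa using h⟩
  | succ n ih =>
    intro x
    obtain ⟨z, hz, y, hy, h⟩ := ih (A x)
    obtain ⟨d, hd, w, hw, e⟩ := dyadic_digit hz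
    refine ⟨w, hw, B y, ?_, ?_⟩
    · change B y - phi w ∈ Ftile
      rw [self_sim, A_sub, AB, A_phi]
      refine ⟨d, hd, ?_⟩
      rw [sub_sub, ← phi_add, add_comm, ← e]
      exact hy
    · have := B_norm (A x - y)
      rw [B_sub, BA] at this
      rw [pow_succ]; linarith

lemma cover (x) : ∃ z, IsDyadic z ∧ x ∈ T z := by
  have hc : IsClosed (⋃ z : {z // IsDyadic z}, T z) :=
    (T_locallyFinite _ fun _ h => h).isClosed_iUnion fun z => T_closed z
  have : x ∈ closure (⋃ z : {z // IsDyadic z}, T z) := by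
    rw [Metric.mem_closure_iff]
    intro ε hε
    obtain ⟨n, hn⟩ := exists_pow_lt_of_lt_one hε (by norm_num : (2/3:ℝ) < 1)
    obtain ⟨z, hz, y, hy, h⟩ := approx n x
    exact ⟨y, Set.mem_iUnion.2 ⟨⟨z, hz⟩, hy⟩, by rw [dist_eq_norm]; linarith⟩
  rw [hc.closure_eq] at this
  obtain ⟨⟨z, hz⟩, h⟩ := Set.mem_iUnion.1 this
  exact ⟨z, hz, h⟩

lemma T_zero : T 0 = Ftile := by ext x; simp [T, phi_zero]

lemma frontier_sub : frontier Ftile ⊆ ⋃ z : {z // IsDyadic z ∧ z ≠ 0}, T 0 ∩ T z := by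
  have hc : IsClosed (⋃ z : {z // IsDyadic z ∧ z ≠ 0}, T z) :=
    (T_locallyFinite _ fun _ h => h.1).isClosed_iUnion fun z => T_closed z
  intro x hx
  rw [frontier_eq_closure_inter_closure, F_compact.isClosed.closure_eq] at hx
  have hsub : Ftileᶜ ⊆ (⋃ z : {z // IsDyadic z ∧ z ≠ 0}, T z) := by
    intro y hy
    obtain ⟨z, hz, h⟩ := cover y
    refine Set.mem_iUnion.2 ⟨⟨z, hz, ?_⟩, h⟩
    rintro rfl
    rw [T_zero] at h; exact hy h
  have h2 := closure_minimal hsub hc hx.2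
  rw [← Set.inter_iUnion, T_zero]
  exact ⟨hx.1, h2⟩

section measure
variable [MeasurableSpace ℚ_[2]] [BorelSpace ℚ_[2]]
    (μ₂ : Measure ℚ_[2]) [μ₂.IsAddHaarMeasure]

lemma ball_two (hμ₂ : μ₂ {x : ℚ_[2] | ‖x‖ ≤ 1} = 1) : μ₂ {x : ℚ_[2] | ‖x‖ ≤ 2} = 2 := by
  have heq : {x : ℚ_[2] | ‖x‖ ≤ 2} = {x : ℚ_[2] | ‖x‖ ≤ 1} ∪ (fun x => x + (-1/2)) ⁻¹' {x : ℚ_[2] | ‖x‖ ≤ 1} := by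
    ext x
    simp only [Set.mem_ofPred_eq, Set.mem_union, Set.mem_preimage]
    constructor
    · intro hx
      obtain ⟨k, hk⟩ := exists_nat_near (2 * x) (by rw [norm_mul, norm2]; linarith) 1
      have h1 : ‖x - k / 2‖ ≤ 1 := by
        have : x - k / 2 = (2 * x - k) / 2 := by field_simp
        rw [this, norm_div, norm2]; linarith
      rcases Nat.even_or_odd' k with ⟨j, rfl | rfl⟩
      · left
        have := Padic.nonarchimedean (x - ((2 * j : ℕ) : ℚ_[2]) / 2) ((j:ℤ) : ℚ_[2])
        have e : x - ((2 * j : ℕ) : ℚ_[2]) / 2 + ((j:ℤ) : ℚ_[2]) = x := by push_cast; ring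
        rw [e] at this
        exact this.trans (max_le h1 (Padic.norm_int_le_one _))
      · right
        have := Padic.nonarchimedean (x - ((2 * j + 1 : ℕ) : ℚ_[2]) / 2) ((j:ℤ) : ℚ_[2])
        have e : x - ((2 * j + 1 : ℕ) : ℚ_[2]) / 2 + ((j:ℤ) : ℚ_[2]) = x + (-1/2) := by push_cast; ring
        rw [e] at this
        exact this.trans (max_le h1 (Padic.norm_int_le_one _))
    · rintro (h | h)
      · linarith
      · have := norm_sub_le (x + (-1/2)) (-1/2)
        have := Padic.nonarchimedean (x + (-1/2)) (1/2)
        have e : x + (-1/2) + 1/2 = x := by ring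
        rw [e] at this
        refine this.trans (max_le (by linarith) ?_)
        rw [norm_div, norm2]; norm_num
  have hm : MeasurableSet {x : ℚ_[2] | ‖x‖ ≤ 1} := (isClosed_le continuous_norm continuous_const).measurableSet
  rw [heq, measure_union, measure_preimage_add_right, hμ₂]
  · norm_num
  · rw [Set.disjoint_left]
    intro x h1 h2
    simp only [Set.mem_ofPred_eq, Set.mem_preimage] at h1 h2
    have := Padic.nonarchimedean (x + (-1/2)) (-x)
    rw [norm_neg] at this
    have e : x + (-1/2) + -x = -(1/2) := by ring
    rw [e, norm_neg, norm_div, norm2] at this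
    have := this.trans (max_le h2 h1)
    norm_num at this
  · exact hm.preimage (by fun_prop)

lemma map_padic (hμ₂ : μ₂ {x : ℚ_[2] | ‖x‖ ≤ 1} = 1) :
    Measure.map (fun x : ℚ_[2] => (-2/3) * x) μ₂ = (2 : ENNReal) • μ₂ := by
  have hne : (-2/3 : ℚ_[2]) ≠ 0 := by norm_num
  let e : ℚ_[2] ≃ₜ+ ℚ_[2] :=
    { toFun := fun x => (-2/3) * x
      invFun := fun x => (-2/3)⁻¹ * x
      left_inv := fun x => by field_simp
      right_inv := fun x => by field_simp
      map_add' := fun x y => by ring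
      continuous_toFun := by fun_prop
      continuous_invFun := by fun_prop }
  have hm : MeasurableSet {x : ℚ_[2] | ‖x‖ ≤ 1} := (isClosed_le continuous_norm continuous_const).measurableSet
  have : (Measure.map e μ₂).IsAddHaarMeasure := inferInstance
  have h := Measure.isAddLeftInvariant_eq_smul (Measure.map e μ₂) μ₂
  have h1 : Measure.map e μ₂ {x : ℚ_[2] | ‖x‖ ≤ 1} = 2 := by
    rw [Measure.map_apply (show Continuous e from e.continuous_toFun).measurable hm, ← ball_two μ₂ hμ₂]
    congr 1
    ext x
    change ‖(-2/3) * x‖ ≤ 1 ↔ ‖x‖ ≤ 2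
    rw [norm_mul, norm_div, norm_neg, norm2, norm3]
    constructor <;> intro h <;> linarith
  change Measure.map e μ₂ = _
  rw [h]
  rw [h, Measure.smul_apply, hμ₂, ENNReal.smul_def, smul_eq_mul, mul_one] at h1
  rw [← h1]
  rfl

lemma map_B (hμ₂ : μ₂ {x : ℚ_[2] | ‖x‖ ≤ 1} = 1) :
    Measure.map B (volume.prod μ₂) = (3 : ENNReal) • (volume.prod μ₂) := by
  have : B = Prod.map (fun x : ℝ => (-2/3) * x) (fun x : ℚ_[2] => (-2/3) * x) := rfl
  rw [this, ← Measure.map_prod_map _ _ (by fun_prop) (by fun_prop), map_padic μ₂ hμ₂,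
    Real.map_volume_mul_left (by norm_num), Measure.prod_smul_left, Measure.prod_smul_right, smul_smul]
  congr 1
  have : |(-2/3:ℝ)⁻¹| = 3/2 := by rw [abs_of_neg] <;> norm_num
  rw [this, show (2:ENNReal) = ENNReal.ofReal 2 by simp, ← ENNReal.ofReal_mul (by norm_num)]
  norm_num

lemma T_measure (z : ℚ) : (volume.prod μ₂) (T z) = (volume.prod μ₂) Ftile := by
  have : T z = (fun x => x + (- phi z)) ⁻¹' Ftile := by ext x; simp [T, sub_eq_add_neg]
  rw [this, measure_preimage_add_right]

lemma three_sets {X : Type*} [MeasurableSpace X] (μ : Measure X) (S U V : Set X)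
    (hU : MeasurableSet U) (m : ENNReal) (hm : m ≠ ⊤)
    (h1 : μ S = m) (h2 : μ U = m) (h3 : μ V = m) (h : 3 * m ≤ μ (S ∪ U ∪ V)) : μ (S ∩ U) = 0 := by
  have a := measure_union_add_inter (μ := μ) S hU
  have b := h.trans (measure_union_le _ _)
  rw [h1, h2] at a
  rw [h3] at b
  have c1 : μ (S ∪ U) ≠ ⊤ := by
    refine ne_top_of_le_ne_top ?_ (le_self_add.trans a.le); simp [hm]
  have c2 : μ (S ∩ U) ≠ ⊤ := by
    refine ne_top_of_le_ne_top ?_ (le_add_self.trans a.le); simp [hm]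
  lift m to NNReal using hm
  generalize μ (S ∪ U) = p at *
  generalize μ (S ∩ U) = q at *
  lift p to NNReal using c1
  lift q to NNReal using c2
  norm_cast at *
  rw [← NNReal.coe_inj] at a ⊢
  rw [← NNReal.coe_le_coe] at b
  push_cast at *
  have := q.2
  change (0:ℝ) ≤ (q:ℝ) at this
  linarith

lemma digit_null (hμ₂ : μ₂ {x : ℚ_[2] | ‖x‖ ≤ 1} = 1) (d e : ℕ) (hd : d ≤ 2) (he : e ≤ 2)
    (hde : d ≠ e) : (volume.prod μ₂) (T (d/2) ∩ T (e/2)) = 0 := by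
  obtain ⟨f, hf⟩ : ∃ f : ℕ, ∀ g ≤ 2, g = d ∨ g = e ∨ g = f := ⟨3 - d - e, by omega⟩
  refine three_sets _ _ _ (T (f/2)) (T_closed _).measurableSet _ F_compact.measure_lt_top.ne
    (T_measure _ _) (T_measure _ _) (T_measure _ _) ?_
  have h : Measure.map B (volume.prod μ₂) Ftile = 3 * (volume.prod μ₂) Ftile := by
    rw [map_B μ₂ hμ₂]; rfl
  rw [Measure.map_apply cont_B.measurable F_compact.isClosed.measurableSet] at h
  rw [← h]
  apply measure_mono
  intro x hx
  obtain ⟨g, hg, h⟩ := (self_sim' x).1 hx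
  rcases hf g hg with rfl | rfl | rfl
  · exact Or.inl (Or.inl h)
  · exact Or.inl (Or.inr h)
  · exact Or.inr h

lemma rep_null (hμ₂ : μ₂ {x : ℚ_[2] | ‖x‖ ≤ 1} = 1) (n : ℕ) : ∀ z z', Rep n z → Rep n z' → z ≠ z' →
    (volume.prod μ₂) (T z ∩ T z') = 0 := by
  induction n with
  | zero => intro z z' h h' hne; exact absurd (h.trans (Eq.symm h')) hne
  | succ n ih =>
    rintro z z' ⟨d, hd, w, hw, e⟩ ⟨d', hd', w', hw', e'⟩ hne
    by_cases hww : w = w'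
    · subst hww
      have hdd : d ≠ d' := by rintro rfl; exact hne (e.trans e'.symm)
      have h := digit_null μ₂ hμ₂ d d' hd hd' hdd
      have : T z ∩ T z' = (fun x => x + (- phi (-3/2 * w))) ⁻¹' (T (d/2) ∩ T (d'/2)) := by
        ext x
        simp only [T, Set.mem_inter_iff, Set.mem_ofPred_eq, Set.mem_preimage, e, e', phi_add]
        rw [← sub_eq_add_neg, sub_sub, sub_sub, add_comm (phi (d/2)), add_comm (phi (d'/2))]
      rw [this, measure_preimage_add_right, h]
    · have h := ih w w' hw hw' hww
      have h' : Measure.map B (volume.prod μ₂) (T w ∩ T w') = 0 := by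
        rw [map_B μ₂ hμ₂, Measure.smul_apply, h]; simp
      rw [Measure.map_apply cont_B.measurable ((T_closed _).inter (T_closed _)).measurableSet] at h'
      refine measure_mono_null ?_ h'
      have key : ∀ (z w : ℚ) (d : ℕ), d ≤ 2 → z = d / 2 + -3/2 * w → ∀ x ∈ T z, B x ∈ T w := by
        intro z w d hd e x hx
        change B x - phi w ∈ Ftile
        rw [self_sim, A_sub, AB, A_phi]
        refine ⟨d, hd, ?_⟩
        rw [sub_sub, ← phi_add, add_comm, ← e]
        exact hx
      rintro x ⟨hx, hx'⟩
      exact ⟨key z w d hd e x hx, key z' w' d' hd' e' x hx'⟩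

lemma dyadic_null (hμ₂ : μ₂ {x : ℚ_[2] | ‖x‖ ≤ 1} = 1) (z z' : ℚ) (hz : IsDyadic z)
    (hz' : IsDyadic z') (hne : z ≠ z') : (volume.prod μ₂) (T z ∩ T z') = 0 := by
  obtain ⟨n, hn⟩ := rep_dyadic hz
  obtain ⟨m, hm⟩ := rep_dyadic hz'
  exact rep_null μ₂ hμ₂ (max n m) z z' (hn.mono (le_max_left _ _)) (hm.mono (le_max_right _ _)) hne

end measure

end FT

/-- The collection `{F + φ(z) : z ∈ ℤ[1/2]}` is a tiling of `K`:
it covers `K`; for any two distinct `z, z' ∈ ℤ[1/2]` the overlap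
`(F + φ(z)) ∩ (F + φ(z'))` has `μ`-measure zero; moreover `μ(∂F) = 0`; so `μ`-almost
every point of `K` lies in exactly one tile. Here `μ = μ_∞ × μ₂` is the product of
Lebesgue measure on `ℝ` with the Haar measure `μ₂` on `ℚ₂` normalized by
`μ₂(ℤ₂) = 1`. -/
theorem Ftile_tiling
    [MeasurableSpace ℚ_[2]] [BorelSpace ℚ_[2]]
    (μ₂ : Measure ℚ_[2]) [μ₂.IsAddHaarMeasure]
    (hμ₂ : μ₂ {x : ℚ_[2] | ‖x‖ ≤ 1} = 1) :
    (∀ x : ℝ × ℚ_[2], ∃ z : ℚ, IsDyadic z ∧ x ∈ (fun y => y + phi z) '' Ftile) ∧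
    (∀ z z' : ℚ, IsDyadic z → IsDyadic z' → z ≠ z' →
      (volume.prod μ₂)
        ((fun y => y + phi z) '' Ftile ∩ (fun y => y + phi z') '' Ftile) = 0) ∧
    (volume.prod μ₂) (frontier Ftile) = 0 ∧
    (∀ᵐ x ∂(volume.prod μ₂),
      ∃! z : ℚ, IsDyadic z ∧ x ∈ (fun y => y + phi z) '' Ftile) := by
  simp only [FT.image_eq]
  refine ⟨FT.cover, FT.dyadic_null μ₂ hμ₂, ?_, ?_⟩
  · refine measure_mono_null FT.frontier_sub ?_
    rw [measure_iUnion_null_iff]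
    rintro ⟨z, hz, hne⟩
    exact FT.dyadic_null μ₂ hμ₂ 0 z (by simpa using FT.dyadic_int 0) hz hne.symm
  · have : ∀ᵐ x ∂(volume.prod μ₂), ∀ z z' : ℚ, IsDyadic z → IsDyadic z' → z ≠ z' →
        ¬ (x ∈ FT.T z ∩ FT.T z') := by
      rw [ae_all_iff]; intro z
      rw [ae_all_iff]; intro z'
      by_cases h : IsDyadic z ∧ IsDyadic z' ∧ z ≠ z'
      · have := measure_eq_zero_iff_ae_notMem.1 (FT.dyadic_null μ₂ hμ₂ z z' h.1 h.2.1 h.2.2)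
        filter_upwards [this] with x hx _ _ _ using hx
      · filter_upwards with x h1 h2 h3
        exact absurd ⟨h1, h2, h3⟩ h
    filter_upwards [this] with x hx
    obtain ⟨z, hz, h⟩ := FT.cover x
    refine ⟨z, ⟨hz, h⟩, ?_⟩
    rintro z' ⟨hz', h'⟩
    by_contra hne
    exact hx z' z hz' hz hne ⟨h', h⟩
end
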